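/- (Multivariate BCH bound) Let C be a nonzero abelian code in A_q(r_1,…,r_s) with defining set D_α(C) for some α ∈ U, and let M be the q-orbits hypermatrix afforded by D_α(C). Suppose there exist a subset γ ⊆ {1,…,s} and integers δ_k ≥ 2 for k ∈ γ such that for each k ∈ γ there is a list j_{(k,0)},…,j_{(k,δ_k−2)} of consecutive integers modulo r_k with H_M(k,j_{(k,i)}) = 0 for all i = 0,…,δ_k−2. Then d_α*(C) ≥ ∏_{k∈γ} δ_k, and hence d*(C) ≥ ∏_{k∈γ} δ_k. -/

import Mathlib

open Classical

noncomputable section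

namespace AbelianCodes

/-- The index set `I = Z_{r 0} × ⋯ × Z_{r (s-1)}`. -/
abbrev Idx {s : ℕ} (r : Fin s → ℕ) : Type := ∀ k, ZMod (r k)

variable {F : Type*} [Field F]

/-- The support of a hypermatrix. -/
def hsupp {s : ℕ} {r : Fin s → ℕ} (M : Idx r → F) : Set (Idx r) := {i | M i ≠ 0}

/-- The hypercolumn `H_M(k,b)` of a hypermatrix, viewed as an `(s-1)`-dimensional
hypermatrix indexed by `∏_{j ≠ k} Z_{r j}`. -/
def hypercol {s : ℕ} {r : Fin (s+1) → ℕ} (M : Idx r → F) (k : Fin (s+1)) (b : ZMod (r k)) :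
    Idx (fun j => r (k.succAbove j)) → F :=
  fun i => M (k.insertNth b i)

/-- `ω_M(k,b)`: the number of consecutive zero hypercolumns
`H_M(k,b+1), H_M(k,b+2), …` (indices modulo `r k`). -/
def runLen {s : ℕ} {r : Fin (s+1) → ℕ} (M : Idx r → F) (k : Fin (s+1)) (b : ZMod (r k)) : ℕ :=
  ((Finset.Ico 1 (r k)).filter
    (fun j => ∀ m : ℕ, m ∈ Finset.Icc 1 j → hypercol M k (b + (m : ZMod (r k))) = 0)).card

/-- The apparent distance `d*(M)` of a hypermatrix, defined recursively on the
number of variables.  (A `0`-dimensional hypermatrix is a scalar, of apparent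
distance `1` if nonzero and `0` otherwise; with this convention the `1`-dimensional
case becomes `max {ω_M(b)+1 : a_b ≠ 0}` and the higher-dimensional case becomes
`max_k max {(ω_M(k,b)+1)·d*(H_M(k,b)) : H_M(k,b) ≠ 0}`, since zero hypermatrices
have apparent distance `0`.) -/
def apd : {s : ℕ} → (r : Fin s → ℕ) → (Idx r → F) → ℕ
  | 0, _, M => if M finZeroElim = 0 then 0 else 1
  | _+1, r, M =>
      Finset.univ.sup fun k =>
        Finset.univ.sup fun b : Fin (r k) =>
          (runLen M k ((b : ℕ) : ZMod (r k)) + 1) *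
            apd (fun j => r (k.succAbove j)) (hypercol M k ((b : ℕ) : ZMod (r k)))

/-- The `q^t`-orbit `Q_t(a)` of `a ∈ I`. -/
def qOrbit {s : ℕ} (r : Fin s → ℕ) (q t : ℕ) (a : Idx r) : Set (Idx r) :=
  {i | ∃ n : ℕ, ∀ k, i k = (q : ZMod (r k)) ^ (t * n) * a k}

/-- `D` is a union of `q^t`-orbits. -/
def OrbitUnion {s : ℕ} (r : Fin s → ℕ) (q t : ℕ) (D : Set (Idx r)) : Prop :=
  ∀ a ∈ D, qOrbit r q t a ⊆ D

/-- The hypermatrix afforded by `D ⊆ I`: entry `0` at indices in `D`, entry `1` elsewhere. -/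
def afforded {s : ℕ} (r : Fin s → ℕ) (D : Set (Idx r)) : Idx r → F :=
  fun i => if i ∈ D then 0 else 1

/-- `M` is a `q^t`-orbits hypermatrix, i.e. the hypermatrix afforded by some union
of `q^t`-orbits. -/
def IsOrbitMx {s : ℕ} (r : Fin s → ℕ) (q t : ℕ) (M : Idx r → F) : Prop :=
  ∃ D : Set (Idx r), OrbitUnion r q t D ∧ M = afforded r D

/-- The minimum apparent distance `mad(M) = min {d*(P) : P a q^t-orbits hypermatrix,
`0 ≠ P ≤ M`}`, where `P ≤ M` means `supp P ⊆ supp M`. -/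
def mad {s : ℕ} (r : Fin s → ℕ) (q t : ℕ) (M : Idx r → F) : ℕ :=
  sInf {d | ∃ P : Idx r → F, IsOrbitMx r q t P ∧ P ≠ 0 ∧ hsupp P ⊆ hsupp M ∧ apd r P = d}

/-- The `q^t`-cyclotomic coset of `b` modulo `r`. -/
def cycCoset (r q t : ℕ) (b : ZMod r) : Set (ZMod r) :=
  {x | ∃ n : ℕ, x = (q : ZMod r) ^ (t * n) * b}



variable {F : Type*} [Field F] {L : Type*} [Field L] [Algebra F L]

/-- An abelian code: a subspace of the group algebra `F[∏ Z_{r k}]` (identified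
with the space of coefficient functions `I → F`) which is closed under all
translations, i.e. an ideal. -/
def IsAbelianCode {s : ℕ} {r : Fin s → ℕ} (C : Submodule F (Idx r → F)) : Prop :=
  ∀ f ∈ C, ∀ a : Idx r, (fun i => f (i - a)) ∈ C

/-- Convolution: the multiplication of the group algebra in the coefficient
function picture. -/
def conv {s : ℕ} {r : Fin s → ℕ} [∀ k, NeZero (r k)] (f g : Idx r → F) : Idx r → F :=
  fun i => ∑ u : Idx r, f u * g (i - u)

/-- The (discrete) Fourier transform `φ_{α,f}(j) = f(α^j)` of a coefficient
function `f : I → F` with respect to `α`, with values in the extension `L`. -/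
def fourier {s : ℕ} {r : Fin s → ℕ} [∀ k, NeZero (r k)] (α : Fin s → L) (f : Idx r → F) :
    Idx r → L :=
  fun j => ∑ i : Idx r, algebraMap F L (f i) * ∏ k, α k ^ ((i k).val * (j k).val)

/-- The Hamming weight of a codeword. -/
def wt {s : ℕ} {r : Fin s → ℕ} [∀ k, NeZero (r k)] (f : Idx r → F) : ℕ :=
  (Finset.univ.filter fun i : Idx r => f i ≠ 0).card

/-- The minimum distance of a code. -/
def dmin {s : ℕ} {r : Fin s → ℕ} [∀ k, NeZero (r k)] (C : Submodule F (Idx r → F)) : ℕ :=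
  sInf {w | ∃ f ∈ C, f ≠ (0 : Idx r → F) ∧ wt f = w}

/-- The defining set `D_α(C) = {a ∈ I : f(α^a) = 0 for all f ∈ C}`. -/
def defSet {s : ℕ} (r : Fin s → ℕ) [∀ k, NeZero (r k)] (α : Fin s → L)
    (C : Submodule F (Idx r → F)) : Set (Idx r) :=
  {a | ∀ f ∈ C, fourier α f a = 0}

/-- The apparent distance of a code `C` with respect to `α`:
`d_α*(C) = min {d*(M(φ_{α,e})) : 0 ≠ e = e² ∈ C}`. -/
def dStarAlpha {s : ℕ} (r : Fin s → ℕ) [∀ k, NeZero (r k)] (α : Fin s → L)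
    (C : Submodule F (Idx r → F)) : ℕ :=
  sInf {d | ∃ e, e ∈ C ∧ e ≠ (0 : Idx r → F) ∧ conv e e = e ∧ apd r (fourier α e) = d}

/-- The apparent distance of a code: `d*(C) = max {d_β*(C) : β ∈ U}`, where `U`
is the set of tuples of primitive roots of unity in `L`. -/
def dStarCode {s : ℕ} (r : Fin s → ℕ) [∀ k, NeZero (r k)] (L : Type*) [Field L] [Algebra F L]
    (C : Submodule F (Idx r → F)) : ℕ :=
  sSup {d | ∃ α : Fin s → L, (∀ k, IsPrimitiveRoot (α k) (r k)) ∧ dStarAlpha r α C = d}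

/-- The defining set of the multivariate BCH code `B_q(α,γ,δ,b)`:
`∪_{k∈γ} ∪_{l=0}^{δ_k−2} ∪_{i ∈ I(k, b_k+l)} Q(i)`. -/
def bchDefSet {s : ℕ} (r : Fin s → ℕ) (q : ℕ) (γ : Finset (Fin s)) (δ b : Fin s → ℕ) :
    Set (Idx r) :=
  ⋃ k ∈ γ, ⋃ l ∈ Finset.range (δ k - 1),
    ⋃ i ∈ {i : Idx r | i k = ((b k + l : ℕ) : ZMod (r k))}, qOrbit r q 1 i


section helpers

lemma hypercol_eq_zero_iff {s : ℕ} {r : Fin (s+1) → ℕ} {K : Type*} [Field K] (M : Idx r → K)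
    (k : Fin (s+1)) (b : ZMod (r k)) :
    hypercol M k b = 0 ↔ ∀ i : Idx r, i k = b → M i = 0 := by
  constructor
  · intro h i hi
    have := congrFun h (fun j => i (k.succAbove j))
    simp only [hypercol, Pi.zero_apply] at this
    rw [← this]
    congr 1
    subst hi
    exact (Fin.insertNth_self_removeNth k i).symm
  · intro h
    funext i
    exact h _ (by simp)

lemma exists_run {s : ℕ} {r : Fin (s+1) → ℕ} [∀ k, NeZero (r k)] {K : Type*} [Field K]
    (M : Idx r → K) (hM : M ≠ 0) (k : Fin (s+1)) (d : ℕ) (j : ZMod (r k))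
    (h : ∀ i : ℕ, i + 1 < d → hypercol M k (j + (i : ZMod (r k))) = 0) :
    ∃ b : ZMod (r k), hypercol M k b ≠ 0 ∧ d ≤ runLen M k b + 1 := by
  have hex : ∃ t : ℕ, hypercol M k (j - 1 - (t : ZMod (r k))) ≠ 0 := by
    by_contra hcon
    push Not at hcon
    apply hM
    funext i
    have := hcon (j - 1 - i k).val
    rw [ZMod.natCast_zmod_val] at this
    exact (hypercol_eq_zero_iff _ _ _).1 this i (by ring)
  have hb := Nat.find_spec hex
  have hmin : ∀ t' < Nat.find hex, hypercol M k (j - 1 - (t' : ZMod (r k))) = 0 := by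
    intro t' ht'
    have := Nat.find_min hex ht'
    simpa using this
  generalize Nat.find hex = t at hb hmin
  have hrun : ∀ m : ℕ, 1 ≤ m → m < d → hypercol M k (j - 1 - (t : ZMod (r k)) + (m : ZMod (r k))) = 0 := by
    intro m h1 hm
    by_cases hmt : m ≤ t
    · have := hmin (t - m) (by omega)
      rw [Nat.cast_sub hmt] at this
      convert this using 2
      ring
    · have := h (m - t - 1) (by omega)
      rw [Nat.cast_sub (by omega), Nat.cast_sub (by omega)] at this
      convert this using 2
      push_cast
      ring
  refine ⟨_, hb, ?_⟩
  have hdr : d ≤ r k := by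
    by_contra hcon
    push Not at hcon
    have := hrun (r k) (Nat.one_le_iff_ne_zero.2 (NeZero.ne _)) hcon
    simp at this
    exact hb this
  have : Finset.Ico 1 d ⊆ ((Finset.Ico 1 (r k)).filter
    (fun l => ∀ m : ℕ, m ∈ Finset.Icc 1 l →
      hypercol M k (j - 1 - (t : ZMod (r k)) + (m : ZMod (r k))) = 0)) := by
    intro x hx
    simp only [Finset.mem_Ico, Finset.mem_filter, Finset.mem_Icc] at hx ⊢
    refine ⟨⟨hx.1, by omega⟩, fun m hm => hrun m hm.1 (by omega)⟩
  have := Finset.card_le_card this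
  rw [Nat.card_Ico] at this
  unfold runLen
  omega

lemma prod_le_apd {K : Type*} [Field K] : ∀ {s : ℕ} (r : Fin s → ℕ) [∀ k, NeZero (r k)]
    (M : Idx r → K) (_ : M ≠ 0) (d : Fin s → ℕ) (j : ∀ k, ZMod (r k))
    (_ : ∀ k, ∀ i : ℕ, i + 1 < d k → ∀ x : Idx r, x k = j k + (i : ZMod (r k)) → M x = 0),
    ∏ k, d k ≤ apd r M
  | 0, r, _, M, hM, d, j, h => by
    have : M finZeroElim ≠ 0 := by
      intro h0
      apply hM
      funext x
      rw [Subsingleton.elim x finZeroElim]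
      exact h0
    simp [apd, this]
  | s+1, r, _, M, hM, d, j, h => by
    obtain ⟨b, hb, hrun⟩ := exists_run M hM 0 (d 0) (j 0)
      (fun i hi => (hypercol_eq_zero_iff _ _ _).2 (h 0 i hi))
    have ih := prod_le_apd (fun l => r ((0 : Fin (s+1)).succAbove l)) (hypercol M 0 b) hb
      (fun l => d ((0 : Fin (s+1)).succAbove l)) (fun l => j ((0 : Fin (s+1)).succAbove l))
      (fun l i hi x hx => h _ i hi _ ((Fin.insertNth_apply_succAbove (α := fun k => ZMod (r k)) (0 : Fin (s+1)) b x l).trans hx))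
    rw [Fin.prod_univ_succAbove _ 0]
    have hbv : ((b.val : ℕ) : ZMod (r 0)) = b := ZMod.natCast_zmod_val b
    rw [apd]
    refine le_trans ?_ (Finset.le_sup (Finset.mem_univ (0 : Fin (s+1))))
    refine le_trans ?_ (Finset.le_sup (Finset.mem_univ (⟨b.val, ZMod.val_lt b⟩ : Fin (r 0))))
    simp only [hbv]
    exact Nat.mul_le_mul hrun ih

variable {K : Type*} [Field K] {L : Type*} [Field L] [Algebra K L] {s : ℕ} {r : Fin s → ℕ}
  [∀ k, NeZero (r k)]

/-- The character pairing. -/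
def chi (α : Fin s → L) (i j : Idx r) : L := ∏ k, α k ^ ((i k).val * (j k).val)

lemma chi_comm (α : Fin s → L) (i j : Idx r) : chi α i j = chi α j i := by
  simp only [chi, mul_comm]

lemma chi_add_left (α : Fin s → L) (hα : ∀ k, IsPrimitiveRoot (α k) (r k)) (i i' j : Idx r) :
    chi α (i + i') j = chi α i j * chi α i' j := by
  simp only [chi, ← Finset.prod_mul_distrib]
  refine Finset.prod_congr rfl fun k _ => ?_
  rw [pow_mul, pow_mul, pow_mul, ← mul_pow, ← pow_add, Pi.add_apply, ZMod.val_add,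
    ← pow_eq_pow_mod _ (hα k).pow_eq_one]

lemma fourier_eq (α : Fin s → L) (f : Idx r → K) (j : Idx r) :
    fourier α f j = ∑ i, algebraMap K L (f i) * chi α i j := rfl

lemma fourier_conv (α : Fin s → L) (hα : ∀ k, IsPrimitiveRoot (α k) (r k)) (f g : Idx r → K) :
    fourier α (conv f g) = fourier α f * fourier α g := by
  funext j
  rw [Pi.mul_apply]
  simp only [fourier_eq, conv, map_sum, map_mul, Finset.sum_mul]
  rw [Finset.sum_comm]
  refine Finset.sum_congr rfl fun u _ => ?_
  rw [Finset.mul_sum, ← Equiv.sum_comp (Equiv.addRight u)]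
  refine Finset.sum_congr rfl fun i _ => ?_
  simp only [Equiv.coe_addRight, add_sub_cancel_right]
  rw [chi_add_left α hα]
  ring

/-- `chi` as a monoid hom. -/
def chiHom (α : Fin s → L) (hα : ∀ k, IsPrimitiveRoot (α k) (r k)) (i : Idx r) :
    Multiplicative (Idx r) →* L where
  toFun j := chi α i j.toAdd
  map_one' := by simp [chi]
  map_mul' a b := by
    rw [toAdd_mul, chi_comm, chi_add_left α hα, chi_comm, chi_comm α b.toAdd]

lemma chiHom_inj (α : Fin s → L) (hα : ∀ k, IsPrimitiveRoot (α k) (r k)) :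
    Function.Injective (chiHom (r := r) α hα) := by
  intro i i' h
  funext k
  rcases Nat.lt_or_ge 1 (r k) with hk | hk
  · have h1 := DFunLike.congr_fun h (Multiplicative.ofAdd (Pi.single k 1))
    have : Fact (1 < r k) := ⟨hk⟩
    have key : ∀ x : Idx r, chi α x (Pi.single k 1) = α k ^ (x k).val := by
      intro x
      unfold chi
      rw [Finset.prod_eq_single k]
      · simp [ZMod.val_one]
      · intro l _ hl
        simp [hl]
      · simp
    change chi α i (Pi.single k 1) = chi α i' (Pi.single k 1) at h1
    rw [key, key] at h1
    exact ZMod.val_injective _ ((hα k).pow_inj (ZMod.val_lt _) (ZMod.val_lt _) h1)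
  · have : (i k).val = (i' k).val := by
      have := ZMod.val_lt (i k)
      have := ZMod.val_lt (i' k)
      omega
    exact ZMod.val_injective _ this

lemma fourier_inj (α : Fin s → L) (hα : ∀ k, IsPrimitiveRoot (α k) (r k)) :
    Function.Injective (fourier α : (Idx r → K) → Idx r → L) := by
  intro f g h
  have hli := (linearIndependent_monoidHom (Multiplicative (Idx r)) L).comp _ (chiHom_inj α hα)
  rw [Fintype.linearIndependent_iff] at hli
  have := hli (fun i => algebraMap K L (f i) - algebraMap K L (g i)) (by
    funext j
    have hj := congrFun h j.toAdd
    simp only [fourier_eq] at hj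
    simp only [Finset.sum_apply, Pi.smul_apply, smul_eq_mul, sub_mul, Function.comp,
      Finset.sum_sub_distrib, Pi.zero_apply]
    exact sub_eq_zero.2 hj)
  funext i
  exact (algebraMap K L).injective (sub_eq_zero.1 (this i))

lemma fourier_zero (α : Fin s → L) : fourier α (0 : Idx r → K) = 0 := by
  funext j
  simp [fourier]

lemma conv_mem (C : Submodule K (Idx r → K)) (hC : IsAbelianCode C) (f g : Idx r → K)
    (hg : g ∈ C) : conv f g ∈ C := by
  have : conv f g = ∑ u : Idx r, f u • (fun i => g (i - u)) := by
    funext i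
    simp [conv, Finset.sum_apply]
  rw [this]
  exact C.sum_mem fun u _ => C.smul_mem _ (hC g hg u)

/-- Convolution powers. -/
def cpow (f : Idx r → K) : ℕ → (Idx r → K)
  | 0 => f
  | n+1 => conv f (cpow f n)

lemma cpow_mem (C : Submodule K (Idx r → K)) (hC : IsAbelianCode C) (f : Idx r → K)
    (hf : f ∈ C) (n : ℕ) : cpow f n ∈ C := by
  induction n with
  | zero => exact hf
  | succ n ih => exact conv_mem C hC _ _ ih

lemma fourier_cpow (α : Fin s → L) (hα : ∀ k, IsPrimitiveRoot (α k) (r k)) (f : Idx r → K)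
    (n : ℕ) : fourier α (cpow f n) = fourier α f ^ (n+1) := by
  induction n with
  | zero => simp [cpow]
  | succ n ih => rw [cpow, fourier_conv α hα, ih, pow_succ' _ (n+1)]

lemma exists_idem [Finite K] (α : Fin s → L) (hα : ∀ k, IsPrimitiveRoot (α k) (r k))
    (C : Submodule K (Idx r → K)) (hC : IsAbelianCode C) (hC0 : C ≠ ⊥) :
    ∃ e, e ∈ C ∧ e ≠ (0 : Idx r → K) ∧ conv e e = e := by
  obtain ⟨f, hf, hf0⟩ := C.exists_mem_ne_zero_of_ne_bot hC0
  obtain ⟨n, m, hnm, h⟩ := Finite.exists_ne_map_eq_of_infinite (cpow f)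
  wlog hlt : n < m generalizing n m
  · exact this m n hnm.symm h.symm (by omega)
  obtain ⟨c, rfl⟩ := Nat.exists_eq_add_of_lt hlt
  have hF := congrArg (fourier α) h
  rw [fourier_cpow α hα, fourier_cpow α hα] at hF
  have hv : ∀ j, fourier α f j = 0 ∨ fourier α f j ^ (c+1) = 1 := by
    intro j
    by_cases h0 : fourier α f j = 0
    · exact Or.inl h0
    · right
      have hj := congrFun hF j
      simp only [Pi.pow_apply] at hj
      rw [show n + c + 1 + 1 = (n + 1) + (c + 1) by ring, pow_add _ (n + 1) (c + 1)] at hj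
      exact (mul_eq_left₀ (pow_ne_zero _ h0)).1 hj.symm
  refine ⟨cpow f c, cpow_mem C hC f hf c, ?_, ?_⟩
  · intro h0
    apply hf0
    apply fourier_inj (L := L) α hα
    rw [fourier_zero]
    have h1 := fourier_cpow α hα f c
    rw [h0, fourier_zero] at h1
    exact eq_zero_of_pow_eq_zero h1.symm
  · apply fourier_inj (L := L) α hα
    rw [fourier_conv α hα, fourier_cpow α hα]
    funext j
    rcases hv j with h0 | h0 <;> simp [h0]

end helpers

/-- **multivariate BCH bound.** Let `C ≠ 0` be an abelian code with
defining set `D_α(C)` and `M = M(D_α(C))`.  Suppose there are `γ ⊆ {1,…,s}` and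
integers `δ_k ≥ 2` (`k ∈ γ`) such that for each `k ∈ γ` there is a list
`j_{(k,0)},…,j_{(k,δ_k−2)}` of consecutive integers modulo `r_k` with
`H_M(k,j_{(k,i)}) = 0` for all `i`.  Then `d_α*(C) ≥ ∏_{k∈γ} δ_k` and hence
`d*(C) ≥ ∏_{k∈γ} δ_k`. -/
theorem multivariate_bch_bound
    {s : ℕ} (r : Fin (s+1) → ℕ) [∀ k, NeZero (r k)]
    {F : Type*} [Field F] [Fintype F]
    (hcop : ∀ k, (Fintype.card F).Coprime (r k))
    (L : Type*) [Field L] [Algebra F L]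
    (α : Fin (s+1) → L) (hα : ∀ k, IsPrimitiveRoot (α k) (r k))
    (C : Submodule F (Idx r → F)) (hC : IsAbelianCode C) (hC0 : C ≠ ⊥)
    (γ : Finset (Fin (s+1))) (δ : Fin (s+1) → ℕ) (hδ : ∀ k ∈ γ, 2 ≤ δ k)
    (j₀ : ∀ k, ZMod (r k))
    (hzero : ∀ k ∈ γ, ∀ i : ℕ, i ≤ δ k - 2 →
      hypercol (afforded r (defSet r α C) : Idx r → L) k (j₀ k + (i : ZMod (r k))) = 0) :
    (∏ k ∈ γ, δ k) ≤ dStarAlpha r α C ∧ (∏ k ∈ γ, δ k) ≤ dStarCode r L C := by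
  have h1 : (∏ k ∈ γ, δ k) ≤ dStarAlpha r α C := by
    obtain ⟨e₀, he₀, he₀0, hid⟩ := exists_idem (L := L) α hα C hC hC0
    refine le_csInf ⟨_, e₀, he₀, he₀0, hid, rfl⟩ ?_
    rintro _ ⟨e, he, he0, -, rfl⟩
    have hP : fourier α e ≠ 0 := by
      intro h
      apply he0
      apply fourier_inj (L := L) α hα
      rw [h, fourier_zero]
    have := prod_le_apd r (fourier α e) hP (fun k => if k ∈ γ then δ k else 1) j₀ (by
      intro k i hi x hx
      by_cases hk : k ∈ γ
      · simp only [hk, if_true] at hi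
        have h0 := (hypercol_eq_zero_iff _ _ _).1 (hzero k hk i (by omega)) x hx
        by_cases hxD : x ∈ defSet r α C
        · exact hxD e he
        · simp [afforded, hxD] at h0
      · simp [hk] at hi)
    rwa [Finset.prod_ite_mem, Finset.univ_inter] at this
  refine ⟨h1, h1.trans (le_csSup ?_ ⟨α, hα, rfl⟩)⟩
  have hfin : {β : Fin (s+1) → L | ∀ k, IsPrimitiveRoot (β k) (r k)}.Finite := by
    refine (Finset.finite_toSet (Fintype.piFinset fun k => primitiveRoots (r k) L)).subset ?_
    intro β hβ
    simp only [Finset.mem_coe, Fintype.mem_piFinset]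
    exact fun k => (mem_primitiveRoots (Nat.pos_of_ne_zero (NeZero.ne _))).2 (hβ k)
  exact (hfin.image (fun β => dStarAlpha r β C)).bddAbove

end AbelianCodes
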